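/- Let N, P, M, L be positive integers with P = M + L and q = NP − L, let F ∈ ℂ^{P×M} have full column rank, h ∈ ℂ^{L+1}, σ > 0, and s ∈ ℂ^{NM}. Define the shift matrices J_l ∈ ℂ^{(NP+L)×NP} ([J_l]_{i,j} = 1 iff i − j = l), H ≜ Σ_{l=0}^{L} h_l J_l, G ≜ [0_{q×L} I_q 0_{q×L}], K ≜ G H (I_N ⊗ F), and K_l ≜ G J_l (I_N ⊗ F). Assume Kᴴ K is invertible, and let Ũ ∈ ℂ^{q×(N−1)L} satisfy Ũᴴ Ũ = I_{(N−1)L} and Ũᴴ K = 0. Let 𝒰_j be the Hankel matrix built from the j-th column of Gᴴ Ũ ([𝒰_j]_{k,i} equals entry k+i of that column) and 𝒰̃ ≜ [𝒰₀ᵀ ⋯ 𝒰_{(N−1)L−1}ᵀ]. Define the FIM blocks [J₀₀]_{ij} = (1/σ²) sᴴ K_iᴴ K_j s, the i-th row of J₀₁ as (1/σ²) sᴴ K_iᴴ K, and J₁₁ = (1/σ²) Kᴴ K. Then J₀₀ − J₀₁ J₁₁⁻¹ J₀₁ᴴ = (1/σ²) 𝒰̃ { I_{(N−1)L} ⊗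 [ (I_N ⊗ F)* s* sᵀ (I_N ⊗ F)ᵀ ] } 𝒰̃ᴴ, which is the matrix whose d-row-and-column-deleted inverse gives the closed-form CRB (38) for blind channel estimation in redundant block transmission systems. -/

import Mathlib

open Matrix
open scoped Kronecker

/-- The matrix `G = [0_{q×L} I_q 0_{q×L}]` with `q = NP - L`. -/
def Gmat (N P L : ℕ) : Matrix (Fin (N * P - L)) (Fin (N * P + L)) ℂ :=
  Matrix.of fun i j => if (j : ℕ) = (i : ℕ) + L then 1 else 0

/-- The shift matrix `J_l` with `[J_l]_{i,j} = 1` iff `i - j = l`. -/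
def shiftJ (N P L : ℕ) (l : Fin (L + 1)) : Matrix (Fin (N * P + L)) (Fin (N * P)) ℂ :=
  Matrix.of fun i j => if (i : ℕ) = (j : ℕ) + (l : ℕ) then 1 else 0

/-- The block-diagonal matrix `I_N ⊗ F : ℂ^{NP × NM}` for `F : ℂ^{P × M}`. -/
def blockF (N P M : ℕ) (hP : 0 < P) (hM : 0 < M) (F : Matrix (Fin P) (Fin M) ℂ) :
    Matrix (Fin (N * P)) (Fin (N * M)) ℂ :=
  Matrix.of fun a b =>
    if (a : ℕ) / P = (b : ℕ) / M then
      F ⟨(a : ℕ) % P, Nat.mod_lt _ hP⟩ ⟨(b : ℕ) % M, Nat.mod_lt _ hM⟩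
    else 0

/-- The Hankel matrix `𝒰_j` built from the `j`-th column of `Gᴴ Ũ`:
`[𝒰_j]_{k,i}` is entry `k + i` of that column. -/
noncomputable def hankelU (N P L r : ℕ) (Ut : Matrix (Fin (N * P - L)) (Fin r) ℂ) (j : Fin r) :
    Matrix (Fin (N * P)) (Fin (L + 1)) ℂ :=
  Matrix.of fun k i =>
    ((Gmat N P L)ᴴ * Ut) ⟨(k : ℕ) + (i : ℕ), by
      have hk := k.isLt; have hi := i.isLt; omega⟩ j

/-- The matrix `𝒰̃ = [𝒰₀ᵀ 𝒰₁ᵀ ⋯ 𝒰_{r-1}ᵀ]`, indexed by `Fin r × Fin (NP) ≃ Fin (NP·r)`. -/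
noncomputable def UtildeMat (N P L r : ℕ) (Ut : Matrix (Fin (N * P - L)) (Fin r) ℂ) :
    Matrix (Fin (L + 1)) (Fin r × Fin (N * P)) ℂ :=
  Matrix.of fun i p => hankelU N P L r Ut p.1 p.2 i

/-- If the columns of `U` are orthonormal and orthogonal to those of `K`, and together they have as
many columns as rows, then the orthogonal projections onto the two column spaces sum to `1`. -/
lemma mul_conjTranspose_add_projection_eq_one {m n r : Type*} [Fintype m] [Fintype n] [Fintype r]
    [DecidableEq m] [DecidableEq n] [DecidableEq r]
    (hcard : Fintype.card m = Fintype.card r + Fintype.card n)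
    (K : Matrix m n ℂ) (U : Matrix m r ℂ) (hK : IsUnit (Kᴴ * K))
    (hU : Uᴴ * U = 1) (hUK : Uᴴ * K = 0) :
    U * Uᴴ + K * (Kᴴ * K)⁻¹ * Kᴴ = 1 := by
  have hKU : Kᴴ * U = 0 := by
    simpa using congrArg conjTranspose hUK
  have hdet : IsUnit (Kᴴ * K).det := (isUnit_iff_isUnit_det _).1 hK
  have hAB : fromRows Uᴴ ((Kᴴ * K)⁻¹ * Kᴴ) * fromCols U K = 1 := by
    rw [fromRows_mul_fromCols, hU, hUK, Matrix.mul_assoc, Matrix.mul_assoc, hKU,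
      nonsing_inv_mul _ hdet, Matrix.mul_zero, fromBlocks_one]
  have hBA : fromCols U K * fromRows Uᴴ ((Kᴴ * K)⁻¹ * Kᴴ) = 1 :=
    (mul_eq_one_comm_of_card_eq _ _ _ (by simpa using hcard.symm)).1 hAB
  rwa [fromCols_mul_fromRows, ← Matrix.mul_assoc] at hBA

/-- The entries of `𝒰̃` are the conjugated entries of `Ũᴴ G J_i`. -/
lemma UtildeMat_apply_eq_star (N P L r : ℕ) (Ut : Matrix (Fin (N * P - L)) (Fin r) ℂ)
    (i : Fin (L + 1)) (p : Fin r × Fin (N * P)) :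
    UtildeMat N P L r Ut i p = star ((Utᴴ * (Gmat N P L * shiftJ N P L i)) p.1 p.2) := by
  have hlt : (p.2 : ℕ) + (i : ℕ) < N * P + L := by omega
  have hcol : (Utᴴ * (Gmat N P L * shiftJ N P L i)) p.1 p.2
      = (Utᴴ * Gmat N P L) p.1 ⟨p.2 + i, hlt⟩ := by
    rw [← Matrix.mul_assoc, Matrix.mul_apply, Finset.sum_eq_single ⟨p.2 + i, hlt⟩]
    · simp [shiftJ]
    · intro b _ hb
      have : (b : ℕ) ≠ p.2 + i := fun h => hb (Fin.ext h)
      simp [shiftJ, this]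
    · simp
  rw [hcol, ← conjTranspose_apply, conjTranspose_mul, conjTranspose_conjTranspose]
  rfl

/-- Sandwiching `I ⊗ x* xᵀ` by `𝒰̃` gives the Gram matrix of the vectors `Ũᴴ G J_i x`. -/
lemma UtildeMat_mul_kronecker_mul_apply (N P L r : ℕ)
    (Ut : Matrix (Fin (N * P - L)) (Fin r) ℂ) (x : Fin (N * P) → ℂ) (i j : Fin (L + 1)) :
    (UtildeMat N P L r Ut
        * ((1 : Matrix (Fin r) (Fin r) ℂ) ⊗ₖ Matrix.of fun a b => star (x a) * x b)
        * (UtildeMat N P L r Ut)ᴴ) i j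
      = star ((Utᴴ * (Gmat N P L * shiftJ N P L i)) *ᵥ x)
          ⬝ᵥ ((Utᴴ * (Gmat N P L * shiftJ N P L j)) *ᵥ x) := by
  simp only [Matrix.mul_apply (M := _ * _), Matrix.mul_apply (M := UtildeMat N P L r Ut),
    conjTranspose_apply, UtildeMat_apply_eq_star, star_star, Fintype.sum_prod_type,
    kronecker_apply, of_apply]
  simp only [dotProduct, mulVec, Pi.star_apply, star_sum, star_mul']
  refine Finset.sum_congr rfl fun c _ => ?_
  rw [Finset.mul_sum]
  refine Finset.sum_congr rfl fun b _ => ?_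
  rw [Finset.sum_eq_single c]
  · rw [Finset.sum_mul, Finset.sum_mul]
    refine Finset.sum_congr rfl fun a _ => ?_
    rw [one_apply_eq]
    ring
  · intro d _ hd
    simp [one_apply_ne hd]
  · simp

/-- **The closed-form CRB computation (38)/(52) for blind channel estimation in
redundant block transmission systems**: with `K = G H (I_N ⊗ F)`,
`K_l = G J_l (I_N ⊗ F)`, FIM blocks `[J₀₀]_{ij} = (1/σ²) sᴴ K_iᴴ K_j s`, `i`-th
row of `J₀₁` equal to `(1/σ²) sᴴ K_iᴴ K`, `J₁₁ = (1/σ²) Kᴴ K`, and `Ũ` an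
orthonormal basis of the left null space of `K`, the Schur complement
`J₀₀ - J₀₁ J₁₁⁻¹ J₀₁ᴴ` equals
`(1/σ²) 𝒰̃ {I_{(N-1)L} ⊗ [(I_N ⊗ F)* s* sᵀ (I_N ⊗ F)ᵀ]} 𝒰̃ᴴ`. -/
theorem blind_channel_CRB_closed_form
    (N P M L : ℕ) (hN : 0 < N) (hP : 0 < P) (hM : 0 < M) (hL : 0 < L)
    (hPML : P = M + L)
    (F : Matrix (Fin P) (Fin M) ℂ) (hF : F.rank = M)
    (h : Fin (L + 1) → ℂ) (σ : ℝ) (hσ : 0 < σ) (s : Fin (N * M) → ℂ)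
    (Ksh : Fin (L + 1) → Matrix (Fin (N * P - L)) (Fin (N * M)) ℂ)
    (hKsh : ∀ l, Ksh l = Gmat N P L * shiftJ N P L l * blockF N P M hP hM F)
    (Kmat : Matrix (Fin (N * P - L)) (Fin (N * M)) ℂ)
    (hKmat : Kmat = Gmat N P L * (∑ l, h l • shiftJ N P L l) * blockF N P M hP hM F)
    (hKinv : IsUnit (Kmatᴴ * Kmat))
    (Ut : Matrix (Fin (N * P - L)) (Fin ((N - 1) * L)) ℂ)
    (hUorth : Utᴴ * Ut = 1)
    (hUK : Utᴴ * Kmat = 0) :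
    (Matrix.of fun (i j : Fin (L + 1)) =>
        (1 / (σ : ℂ) ^ 2) * (star s ⬝ᵥ ((Ksh i)ᴴ * Ksh j) *ᵥ s))
      - (Matrix.of fun (i : Fin (L + 1)) (j : Fin (N * M)) =>
          (1 / (σ : ℂ) ^ 2) * (star s ᵥ* ((Ksh i)ᴴ * Kmat)) j)
        * ((1 / (σ : ℂ) ^ 2) • (Kmatᴴ * Kmat))⁻¹
        * (Matrix.of fun (i : Fin (L + 1)) (j : Fin (N * M)) =>
            (1 / (σ : ℂ) ^ 2) * (star s ᵥ* ((Ksh i)ᴴ * Kmat)) j)ᴴ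
    = (1 / (σ : ℂ) ^ 2) •
        (UtildeMat N P L ((N - 1) * L) Ut
          * ((1 : Matrix (Fin ((N - 1) * L)) (Fin ((N - 1) * L)) ℂ) ⊗ₖ
              Matrix.of fun a b =>
                star ((blockF N P M hP hM F *ᵥ s) a) * (blockF N P M hP hM F *ᵥ s) b)
          * (UtildeMat N P L ((N - 1) * L) Ut)ᴴ) := by
  have hcard : Fintype.card (Fin (N * P - L))
      = Fintype.card (Fin ((N - 1) * L)) + Fintype.card (Fin (N * M)) := by
    obtain ⟨n, rfl⟩ : ∃ n, N = n + 1 := ⟨N - 1, by omega⟩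
    subst hPML
    simp only [Fintype.card_fin, Nat.add_sub_cancel]
    have : (n + 1) * (M + L) = n * L + (n + 1) * M + L := by ring
    omega
  have hproj := mul_conjTranspose_add_projection_eq_one hcard Kmat Ut hKinv hUorth hUK
  have hdet : IsUnit (Kmatᴴ * Kmat).det := (isUnit_iff_isUnit_det _).1 hKinv
  have hσ' : (σ : ℂ) ≠ 0 := by exact_mod_cast hσ.ne'
  set c : ℂ := 1 / (σ : ℂ) ^ 2 with hc
  have hc0 : c ≠ 0 := by rw [hc]; exact one_div_ne_zero (pow_ne_zero 2 hσ')
  have hcstar : star c = c := by simp [hc]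
  set A : Matrix (Fin (L + 1)) (Fin (N * P - L)) ℂ :=
    Matrix.of fun i => star (Ksh i *ᵥ s) with hA
  have hJ₀₀ : (Matrix.of fun (i j : Fin (L + 1)) =>
      c * (star s ⬝ᵥ ((Ksh i)ᴴ * Ksh j) *ᵥ s)) = c • (A * Aᴴ) := by
    ext i j
    rw [of_apply, Matrix.smul_apply, smul_eq_mul, ← mulVec_mulVec, dotProduct_mulVec,
      ← star_mulVec]
    simp [hA, Matrix.mul_apply, dotProduct]
  have hJ₀₁ : (Matrix.of fun (i : Fin (L + 1)) (j : Fin (N * M)) =>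
      c * (star s ᵥ* ((Ksh i)ᴴ * Kmat)) j) = c • (A * Kmat) := by
    ext i j
    rw [of_apply, Matrix.smul_apply, smul_eq_mul, ← vecMul_vecMul, ← star_mulVec]
    rfl
  have hinv : (c • (Kmatᴴ * Kmat))⁻¹ = c⁻¹ • (Kmatᴴ * Kmat)⁻¹ := by
    refine inv_eq_left_inv ?_
    rw [Matrix.smul_mul, Matrix.mul_smul, smul_smul, inv_mul_cancel₀ hc0, one_smul,
      nonsing_inv_mul _ hdet]
  have hRHS : UtildeMat N P L ((N - 1) * L) Ut
          * ((1 : Matrix (Fin ((N - 1) * L)) (Fin ((N - 1) * L)) ℂ) ⊗ₖ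
              Matrix.of fun a b =>
                star ((blockF N P M hP hM F *ᵥ s) a) * (blockF N P M hP hM F *ᵥ s) b)
          * (UtildeMat N P L ((N - 1) * L) Ut)ᴴ = A * (Ut * Utᴴ) * Aᴴ := by
    have hvec : ∀ i, (Utᴴ * (Gmat N P L * shiftJ N P L i)) *ᵥ (blockF N P M hP hM F *ᵥ s)
        = Utᴴ *ᵥ (Ksh i *ᵥ s) := fun i => by
      rw [hKsh, mulVec_mulVec, mulVec_mulVec, Matrix.mul_assoc Utᴴ]
    ext i j
    rw [UtildeMat_mul_kronecker_mul_apply, hvec, hvec, star_mulVec, conjTranspose_conjTranspose,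
      ← Matrix.mul_assoc, Matrix.mul_assoc (A * Ut), Matrix.mul_apply]
    refine Finset.sum_congr rfl fun k _ => ?_
    congr 1
    simp [hA, Matrix.mul_apply, mulVec, dotProduct]
  rw [hJ₀₀, hJ₀₁, hinv, hRHS, eq_sub_of_add_eq hproj, conjTranspose_smul, conjTranspose_mul, hcstar]
  simp only [Matrix.smul_mul, Matrix.mul_smul, smul_smul, Matrix.mul_sub, Matrix.sub_mul,
    Matrix.mul_one, smul_sub, Matrix.mul_assoc]
  congr 2
  field_simp
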